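/- arXiv:2307.16237 — 2 statements merged into one kernel-verified Lean document; each statement's English description precedes it below -/
import Mathlib

section
/- If R is a CUNC-ring, then the following are equivalent: (1) R is a uniquely nil-clean ring (every element of R is uniquely nil-clean); (2) R is a nil-clean ring (every element of R is nil-clean); (3) R is a clean ring (every element of R is clean); (4) R is an exchange ring (for every a ∈ R there exists an idempotent e ∈ Ra with 1 − e ∈ R(1 − a)); (5) R is a semipotent ring. -/
/-!
Write "CUNC" for the hypothesis that clean elements are uniquely nil-clean.

Idempotents are clean, and `e = e + 0` and `e + e r (1 - e)` are both idempotent and differ by a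
nilpotent, so CUNC forces every idempotent to be central (`IsCUNCRing.abelian`). A unit `u = e + b`
then has `e = u - b` a difference of a unit and a commuting nilpotent, so `e` is an idempotent unit
and `e = 1`: units are unipotent (`IsCUNCRing.uu`). In particular the Jacobson radical is nil.

The implications between uniquely nil-clean, nil-clean, clean, exchange and semipotent are then
the classical ones. The substantial one is that semipotent implies nil-clean: if `a - a ^ 2` is not
in the Jacobson radical `J`, some nonzero idempotent `e` is a left multiple of it, so `a` and
`1 - a` both become units in the corner `e R`. Both are therefore unipotent there, whence `e a` is
at once nilpotent and invertible in `e R`, forcing `e = 0` (`IsSemipotentRing.sub_sq_mem_jacobson`).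
So `R / J` is Boolean with `J` nil, and idempotents lift modulo `J`.
-/

open Pointwise

section Defs

variable {R : Type*} [Ring R]

/-- An element is nil-clean if it is a sum of an idempotent and a nilpotent. -/
def IsNilCleanElem (a : R) : Prop :=
  ∃ e b : R, IsIdempotentElem e ∧ IsNilpotent b ∧ a = e + b

/-- An element is strongly nil-clean if it is a sum of a commuting idempotent and nilpotent. -/
def IsStronglyNilCleanElem (a : R) : Prop :=
  ∃ e b : R, IsIdempotentElem e ∧ IsNilpotent b ∧ Commute e b ∧ a = e + b

/-- An element is uniquely nil-clean if it is nil-clean and the idempotent in any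
nil-clean decomposition of it is unique. -/
def IsUniquelyNilCleanElem (a : R) : Prop :=
  IsNilCleanElem a ∧ ∀ e b f c : R, IsIdempotentElem e → IsNilpotent b →
    IsIdempotentElem f → IsNilpotent c → a = e + b → a = f + c → e = f

/-- An element is clean if it is a sum of an idempotent and a unit. -/
def IsCleanElem (a : R) : Prop :=
  ∃ e u : R, IsIdempotentElem e ∧ IsUnit u ∧ a = e + u

/-- An element is uniquely clean if it is clean and the idempotent in any
clean decomposition of it is unique. -/
def IsUniquelyCleanElem (a : R) : Prop :=
  IsCleanElem a ∧ ∀ e u f v : R, IsIdempotentElem e → IsUnit u →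
    IsIdempotentElem f → IsUnit v → a = e + u → a = f + v → e = f

end Defs

/-- A ring is abelian if every idempotent is central. -/
def IsAbelianRing (R : Type*) [Ring R] : Prop :=
  ∀ e : R, IsIdempotentElem e → ∀ r : R, e * r = r * e

/-- A ring is a UU-ring if every unit is unipotent. -/
def IsUURing (R : Type*) [Ring R] : Prop :=
  ∀ u : R, IsUnit u → ∃ b : R, IsNilpotent b ∧ u = 1 + b

/-- A ring is a CUNC-ring if every clean element is uniquely nil-clean. -/
def IsCUNCRing (R : Type*) [Ring R] : Prop :=
  ∀ a : R, IsCleanElem a → IsUniquelyNilCleanElem a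

/-- A ring is a CUC-ring if every clean element is uniquely clean. -/
def IsCUCRing (R : Type*) [Ring R] : Prop :=
  ∀ a : R, IsCleanElem a → IsUniquelyCleanElem a

/-- A ring is semipotent if every left ideal not contained in the Jacobson radical
contains a nonzero idempotent. -/
def IsSemipotentRing (R : Type*) [Ring R] : Prop :=
  ∀ L : Ideal R, ¬ L ≤ Ideal.jacobson (⊥ : Ideal R) → ∃ e ∈ L, e ≠ 0 ∧ IsIdempotentElem e

/-- The decomposition is `e = (1 - e) + (2 * e - 1)`, where `2 * e - 1` is its own inverse. -/
theorem IsIdempotentElem.isCleanElem {R : Type*} [Ring R] {e : R} (he : IsIdempotentElem e) :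
    IsCleanElem e := by
  refine ⟨1 - e, 2 * e - 1, he.one_sub, ?_, by noncomm_ring⟩
  have h : (2 * e - 1) * (2 * e - 1) = 1 := by
    have : (2 * e - 1) * (2 * e - 1) = 4 * (e * e) - 4 * e + 1 := by noncomm_ring
    rw [this, he.eq]; noncomm_ring
  exact ⟨⟨_, _, h, h⟩, rfl⟩

theorem IsIdempotentElem.eq_one_of_unit {R : Type*} [Ring R] {e : R} (he : IsIdempotentElem e)
    (hu : IsUnit e) : e = 1 :=
  hu.mul_left_cancel (by rw [he.eq, mul_one])

theorem IsCUNCRing.abelian {R : Type*} [Ring R] (h : IsCUNCRing R) : IsAbelianRing R := by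
  -- One-sided Peirce components vanish; the other side is the case of `1 - e`.
  have key : ∀ e : R, IsIdempotentElem e → ∀ r : R, e * r * (1 - e) = 0 := by
    intro e he r
    have h0 : (1 - e) * e = 0 := by rw [sub_mul, one_mul, he.eq, sub_self]
    have hx2 : e * r * (1 - e) * (e * r * (1 - e)) = 0 := by
      calc _ = e * r * ((1 - e) * e) * (r * (1 - e)) := by noncomm_ring
        _ = 0 := by rw [h0]; simp
    have hex : e * (e * r * (1 - e)) = e * r * (1 - e) := by
      rw [← mul_assoc, ← mul_assoc, he.eq]
    have hxe : e * r * (1 - e) * e = 0 := by rw [mul_assoc, h0, mul_zero]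
    generalize e * r * (1 - e) = x at *
    have hf : IsIdempotentElem (e + x) := by
      unfold IsIdempotentElem
      rw [mul_add, add_mul, add_mul, he.eq, hx2, hex, hxe]; simp
    have := (h _ hf.isCleanElem).2 e x (e + x) 0 he ⟨2, by rw [pow_two, hx2]⟩ hf
      IsNilpotent.zero rfl (by simp)
    simpa using this
  intro e he r
  have h1 := key e he r
  have h2 := key (1 - e) he.one_sub r
  rw [mul_sub, mul_one, sub_eq_zero] at h1
  rw [sub_sub_cancel, sub_mul, sub_mul, one_mul, sub_eq_zero] at h2
  rw [h1, h2]

/-- Abelian rings are Dedekind-finite: `y * x` is idempotent, hence central. -/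
theorem IsAbelianRing.mul_eq_one_symm {R : Type*} [Ring R] (h : IsAbelianRing R) {x y : R}
    (hxy : x * y = 1) : y * x = 1 := by
  have hi : IsIdempotentElem (y * x) := by
    unfold IsIdempotentElem
    rw [mul_assoc, ← mul_assoc x, hxy, one_mul]
  calc y * x = (y * x) * (x * y) := by rw [hxy, mul_one]
    _ = ((y * x) * x) * y := by simp only [mul_assoc]
    _ = (x * y) * (x * y) := by rw [h _ hi x]; simp only [mul_assoc]
    _ = 1 := by rw [hxy, one_mul]

theorem IsAbelianRing.isUnit_of_mul_eq_one {R : Type*} [Ring R] (h : IsAbelianRing R) {x y : R}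
    (hxy : x * y = 1) : IsUnit y :=
  ⟨⟨y, x, h.mul_eq_one_symm hxy, hxy⟩, rfl⟩

theorem IsCUNCRing.uu {R : Type*} [Ring R] (h : IsCUNCRing R) : IsUURing R := by
  intro u hu
  obtain ⟨e, b, he, hb, rfl⟩ := (h u ⟨0, u, IsIdempotentElem.zero, hu, by simp⟩).1
  have hc : Commute e b := h.abelian e he b
  have h1 : IsUnit e := by
    have := hb.neg.isUnit_add_left_of_commute hu (((hc.symm.add_right (Commute.refl b))).neg_left)
    simpa using this
  exact ⟨b, hb, by rw [he.eq_one_of_unit h1]⟩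

theorem IsUURing.isNilpotent_of_mem_jacobson {R : Type*} [Ring R] (hab : IsAbelianRing R)
    (huu : IsUURing R) {x : R} (hx : x ∈ Ideal.jacobson (⊥ : Ideal R)) : IsNilpotent x := by
  obtain ⟨z, hz⟩ := Ideal.mem_jacobson_iff.1 hx 1
  have hz' : z * (1 + x) = 1 := by
    rw [Ideal.mem_bot, sub_eq_zero] at hz
    rw [mul_one] at hz
    rw [mul_add, mul_one, add_comm, hz]
  obtain ⟨b, hb, he⟩ := huu _ (hab.isUnit_of_mul_eq_one hz')
  rwa [add_left_cancel he]

/-- The ring modulo its Jacobson radical is Boolean; this is the only use of semipotence. -/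
theorem IsSemipotentRing.sub_sq_mem_jacobson {R : Type*} [Ring R] (hs : IsSemipotentRing R)
    (hab : IsAbelianRing R) (huu : IsUURing R) (a : R) :
    a - a ^ 2 ∈ Ideal.jacobson (⊥ : Ideal R) := by
  by_contra hn
  obtain ⟨e, heL, he0, he⟩ := hs (Ideal.span {a - a ^ 2}) fun hle =>
    hn (hle (Ideal.mem_span_singleton_self _))
  obtain ⟨r, hr⟩ := Ideal.mem_span_singleton'.1 heL
  have hc : ∀ x, e * x = x * e := hab e he
  -- An element left-invertible in the corner `e R`, extended by `1 - e`, is a unit of `R`.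
  have unit_of : ∀ s t : R, s * t = e → IsUnit (e * t + (1 - e)) := by
    intro s t hst
    apply hab.isUnit_of_mul_eq_one (x := e * s + (1 - e))
    have h0 : (1 - e) * e = 0 := by rw [sub_mul, one_mul, he.eq, sub_self]
    have h0' : e * (1 - e) = 0 := by rw [mul_sub, mul_one, he.eq, sub_self]
    calc (e * s + (1 - e)) * (e * t + (1 - e))
        = e * (s * e) * t + (e * s) * (1 - e) + (1 - e) * e * t + (1 - e) * (1 - e) := by
          noncomm_ring
      _ = e * e * (s * t) + s * (e * (1 - e)) + (1 - e) * e * t + (1 - e) * (1 - e) := by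
          rw [← hc s, hc s]
          congr 3
          · rw [← hc s]; noncomm_ring
          · noncomm_ring
      _ = 1 := by rw [hst, h0, h0', he.eq, he.eq, he.one_sub.eq]; simp
  have hv : IsUnit (e * a + (1 - e)) := unit_of (r * (1 - a)) a (by rw [← hr]; noncomm_ring)
  have hw : IsUnit (e * (1 - a) + (1 - e)) :=
    unit_of (r * a) (1 - a) (by rw [← hr]; noncomm_ring)
  -- Unipotence of `e * (1 - a) + (1 - e) = 1 - e * a` makes `e * a` nilpotent.
  obtain ⟨c, hcn, hce⟩ := huu _ hw
  have hea : IsNilpotent (-(e * a)) := by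
    have : c = -(e * a) := by
      apply add_left_cancel (a := (1 : R)); rw [← hce]; noncomm_ring
    rwa [← this]
  have hcomm : Commute (-(e * a)) (e * a + (1 - e)) := by
    have h1 : Commute e (e * a) := hc _
    exact ((Commute.refl _).add_right ((Commute.one_right _).sub_right h1.symm)).neg_left
  have h1e : IsUnit (1 - e) := by
    have := hea.isUnit_add_left_of_commute hv hcomm
    simpa using this
  exact he0 (by simpa using he.one_sub.eq_one_of_unit h1e)

/-- In a CUNC-ring, being uniquely nil-clean, nil-clean, clean, exchange
and semipotent are all equivalent. -/
theorem cunc_clean_tfae {R : Type*} [Ring R] (h : IsCUNCRing R) :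
    [∀ a : R, IsUniquelyNilCleanElem a,
     ∀ a : R, IsNilCleanElem a,
     ∀ a : R, IsCleanElem a,
     ∀ a : R, ∃ e : R, IsIdempotentElem e ∧ e ∈ Ideal.span {a} ∧
       (1 - e) ∈ Ideal.span {1 - a},
     IsSemipotentRing R].TFAE := by
  have hab := h.abelian
  have huu := h.uu
  tfae_have 1 → 2 := fun H a => (H a).1
  tfae_have 2 → 3 := by
    intro H a
    obtain ⟨e, b, he, hb, hab'⟩ := H (a - 1)
    exact ⟨e, 1 + b, he, hb.isUnit_one_add, by rw [← sub_add_cancel a 1, hab']; abel⟩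
  tfae_have 3 → 1 := fun H a => h a (H a)
  tfae_have 3 → 4 := by
    intro H a
    obtain ⟨e, u, he, ⟨u, rfl⟩, rfl⟩ := H a
    have hee : (1 - e) * e = 0 := by rw [sub_mul, one_mul, he.eq, sub_self]
    have hc := hab e he
    refine ⟨1 - e, he.one_sub, Ideal.mem_span_singleton'.2 ⟨↑u⁻¹ * (1 - e), ?_⟩,
      Ideal.mem_span_singleton'.2 ⟨-(↑u⁻¹ * e), ?_⟩⟩
    · rw [mul_assoc, mul_add, hee, zero_add, hab _ he.one_sub, ← mul_assoc, Units.inv_mul, one_mul]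
    · have : e * (1 - (e + ↑u)) = -(↑u * e) := by
        rw [← hc u, mul_sub, mul_add, he.eq]; noncomm_ring
      rw [neg_mul, mul_assoc, this, mul_neg, neg_neg, ← mul_assoc, Units.inv_mul]
      simp
  tfae_have 4 → 5 := by
    intro H L hL
    obtain ⟨a, haL, haJ⟩ := SetLike.not_le_iff_exists.1 hL
    rw [Ideal.mem_jacobson_iff] at haJ
    push Not at haJ
    obtain ⟨y, hy⟩ := haJ
    -- `1 + y * a` has no left inverse, so the exchange idempotent of `-(y * a)` is nonzero.
    obtain ⟨e, he, h1, h2⟩ := H (-(y * a))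
    have hsub : Ideal.span {-(y * a)} ≤ L := by
      rw [Ideal.span_singleton_le_iff_mem]
      exact L.neg_mem (L.mul_mem_left y haL)
    refine ⟨e, hsub h1, ?_, he⟩
    rintro rfl
    obtain ⟨z, hz⟩ := Ideal.mem_span_singleton'.1 h2
    apply hy z
    rw [Ideal.mem_bot, sub_eq_zero]
    rw [sub_zero] at hz
    rw [sub_neg_eq_add, mul_add, mul_one] at hz
    rw [mul_assoc, add_comm, hz]
  tfae_have 5 → 2 := by
    intro hs a
    let J := Ideal.jacobson (⊥ : Ideal R)
    -- `a` is idempotent modulo the nil ideal `J`, so it lifts to an idempotent of `R`.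
    obtain ⟨e, he, hea⟩ := exists_isIdempotentElem_eq_of_ker_isNilpotent (Ideal.Quotient.mk J)
      (fun x hx => huu.isNilpotent_of_mem_jacobson hab (by rwa [Ideal.mk_ker] at hx))
      (Ideal.Quotient.mk J a) ⟨a, rfl⟩ (by
        have := Ideal.Quotient.eq_zero_iff_mem.2 (hs.sub_sq_mem_jacobson hab huu a)
        rw [map_sub, sub_eq_zero, pow_two, map_mul] at this
        exact this.symm)
    exact ⟨e, a - e, he,
      huu.isNilpotent_of_mem_jacobson hab (Ideal.Quotient.eq.1 hea.symm), by abel⟩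
  tfae_finish
end

section
/- Let R be a semipotent ring. Then R is a CUNC-ring if and only if R is a CUC-ring and the Jacobson radical J(R) is nil. -/
/-!
Either condition forces two idempotents `e`, `f` with `(f - e) ^ 2 = 0` to be equal. Comparing `e`
with `e + e * r * (1 - e)` and with `e + (1 - e) * r * e` then shows that all idempotents are
central. Central idempotents differing by a difference of nilpotents are equal, because that
difference is then a nilpotent `d` with `d ^ 3 = d`; this gives uniqueness of decompositions in both
directions.

A CUNC-ring is thus abelian, and a unit `u = e + b` has `(1 - e) * u` nilpotent, whence `e = 1`: all
units are unipotent. So clean decompositions `e + (1 + b)` are unique, and for `x` in the radical the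
unit `1 + x` shows that `x` is nilpotent.

Conversely, in a semipotent CUC-ring each unit `u` is congruent to `1` modulo the radical: otherwise
there is a nonzero central idempotent `e` such that `1 - u` is invertible in the corner `e * R`, so
`u - e` is a unit and `u = 0 + u = e + (u - e)` are two clean decompositions. When the radical is nil
the units are therefore unipotent; in particular `2` is nilpotent (take `u = -1`), and
`e + (1 + b) = (1 - e) + (2 * e + b)` turns a clean decomposition into a nil-clean one.
-/

open Pointwise

section Helpers

variable {R : Type*} [Ring R]

theorem isAbelianRing_of_idempotents_eq
    (H : ∀ e f : R, IsIdempotentElem e → IsIdempotentElem f → (f - e) * (f - e) = 0 → e = f) :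
    IsAbelianRing R := by
  intro e he r
  have he' : e * e = e := he
  have hx (x : R) : e * (e * x) = e * x := by rw [← mul_assoc, he']
  have h1 : e = e + (e * r - e * r * e) := by
    apply H e _ he
    · simp only [IsIdempotentElem, mul_add, add_mul, mul_sub, sub_mul, mul_assoc, he', hx]
      abel
    · simp only [add_sub_cancel_left, mul_sub, sub_mul, mul_assoc, hx]
      abel
  have h2 : e = e + (r * e - e * r * e) := by
    apply H e _ he
    · simp only [IsIdempotentElem, mul_add, add_mul, mul_sub, sub_mul, mul_assoc, he', hx]
      abel
    · simp only [add_sub_cancel_left, mul_sub, sub_mul, mul_assoc, hx]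
      abel
  rw [sub_eq_zero.mp (left_eq_add.mp h1), sub_eq_zero.mp (left_eq_add.mp h2)]

theorem IsCUNCRing.isAbelianRing (h : IsCUNCRing R) : IsAbelianRing R := by
  refine isAbelianRing_of_idempotents_eq fun e f he hf hn => ?_
  have hf' : f * f = f := hf
  -- `f = (1 - f) + (2 * f - 1)`, and `2 * f - 1` is an involution
  have hc : IsCleanElem f := by
    have hu : (2 * f - 1) * (2 * f - 1) = 1 := by
      simp only [two_mul, mul_add, add_mul, mul_sub, sub_mul, hf', mul_one, one_mul]
      abel
    refine ⟨1 - f, 2 * f - 1, hf.one_sub, ⟨⟨_, _, hu, hu⟩, rfl⟩, ?_⟩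
    rw [two_mul]; abel
  exact (h f hc).2 e (f - e) f 0 he ⟨2, by rw [pow_two, hn]⟩ hf IsNilpotent.zero
    (by abel) (by abel)

theorem IsCUCRing.isAbelianRing (h : IsCUCRing R) : IsAbelianRing R := by
  refine isAbelianRing_of_idempotents_eq fun e f he hf hn => ?_
  -- `e + 1 = f + (1 - (f - e))`
  exact (h (e + 1) ⟨e, 1, he, isUnit_one, rfl⟩).2 e 1 f (1 - (f - e)) he isUnit_one hf
    (IsNilpotent.isUnit_one_sub ⟨2, by rw [pow_two, hn]⟩) rfl (by abel)

/-- In an abelian ring, nil-clean decompositions are unique. -/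
theorem IsAbelianRing.idempotent_eq_of_add_nilpotent (h : IsAbelianRing R) {e b f c : R}
    (he : IsIdempotentElem e) (hb : IsNilpotent b) (hf : IsIdempotentElem f)
    (hc : IsNilpotent c) (H : e + b = f + c) : e = f := by
  have he' : e * e = e := he
  have hf' : f * f = f := hf
  have hcb : c = (e - f) + b := by
    rw [eq_comm, ← sub_eq_zero, ← sub_eq_zero.mpr H]; abel
  have hcomm : Commute c b := by
    rw [hcb]
    have hbe : Commute e b := h e he b
    exact (hbe.sub_left (h f hf b)).add_left (Commute.refl b)
  have hnil : IsNilpotent (e - f) := by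
    have := hcomm.isNilpotent_sub hc hb
    rwa [hcb, add_sub_cancel_right] at this
  have hef : f * e = e * f := h f hf e
  have h3 : (e - f) * ((e - f) * (e - f)) = e - f := by
    have hx (x : R) : e * (e * x) = e * x := by rw [← mul_assoc, he']
    have hy (x : R) : f * (e * x) = e * (f * x) := by rw [← mul_assoc, hef, mul_assoc]
    simp only [mul_sub, sub_mul, he', hf', hef, hx, hy]
    abel
  -- `(e - f) ^ 2` is a nilpotent idempotent
  have hid : IsIdempotentElem ((e - f) * (e - f)) := by
    rw [IsIdempotentElem, mul_assoc, h3]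
  obtain ⟨n, hn⟩ : IsNilpotent ((e - f) * (e - f)) :=
    (Commute.refl (e - f)).isNilpotent_mul_right hnil
  have hsq : (e - f) * (e - f) = 0 := by
    have := hid.pow_succ_eq n
    rw [pow_succ, hn, zero_mul] at this
    exact this.symm
  rw [hsq, mul_zero] at h3
  exact sub_eq_zero.mp h3.symm

theorem IsCUNCRing.isUURing (h : IsCUNCRing R) : IsUURing R := by
  intro u hu
  obtain ⟨⟨e, b, he, hb, hue⟩, -⟩ := h u ⟨0, u, IsIdempotentElem.zero, hu, (zero_add u).symm⟩
  have hab := h.isAbelianRing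
  have h1 : (1 - e) * u = (1 - e) * b := by
    rw [hue, mul_add, he.one_sub_mul_self, zero_add]
  have hcb : Commute (1 - e) b := hab _ he.one_sub b
  have hcu : Commute (1 - e) u := hab _ he.one_sub u
  obtain ⟨n, hn⟩ : IsNilpotent ((1 - e) * u) := h1 ▸ hcb.isNilpotent_mul_left hb
  have h2 : (1 - e) * u ^ (n + 1) = 0 := by
    rw [← he.one_sub.pow_succ_eq n, ← hcu.mul_pow, pow_succ, hn, zero_mul]
  have h3 : 1 - e = 0 := (hu.pow (n + 1)).mul_left_eq_zero.mp h2
  exact ⟨b, hb, by rw [hue, ← sub_eq_zero.mp h3]⟩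

theorem isUnit_one_add_of_mem_jacobson_bot {x : R} (hx : x ∈ Ideal.jacobson (⊥ : Ideal R)) :
    IsUnit (1 + x) := by
  have key : ∀ y ∈ Ideal.jacobson (⊥ : Ideal R), ∃ s, s * (1 + y) = 1 := by
    intro y hy
    obtain ⟨s, hs⟩ := Ideal.exists_mul_sub_mem_of_sub_one_mem_jacobson (I := (⊥ : Ideal R))
      (1 + y) (by simpa using hy)
    exact ⟨s, sub_eq_zero.mp (by simpa using hs)⟩
  obtain ⟨s, hs⟩ := key x hx
  -- the left inverse `s = 1 - s * x` of `1 + x` is itself left invertible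
  obtain ⟨t, ht⟩ := key (-(s * x)) (neg_mem (Ideal.mul_mem_left _ s hx))
  have hs' : 1 + -(s * x) = s := by
    rw [← hs]
    simp [mul_add]
  rw [hs'] at ht
  have htx : t = 1 + x := left_inv_eq_right_inv ht hs
  exact ⟨⟨1 + x, s, htx ▸ ht, hs⟩, rfl⟩

theorem IsCUCRing.one_sub_mem_jacobson (h : IsCUCRing R) (hsp : IsSemipotentRing R) {u : R}
    (hu : IsUnit u) : 1 - u ∈ Ideal.jacobson (⊥ : Ideal R) := by
  by_contra hJ
  have hab := h.isAbelianRing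
  obtain ⟨e, heL, he0, he⟩ := hsp (Ideal.span {1 - u})
    fun hle => hJ (hle (Ideal.subset_span rfl))
  obtain ⟨r, hr⟩ := Ideal.mem_span_singleton'.mp heL
  generalize hs : 1 - u = s at hr
  have he' : e * e = e := he
  have ce : ∀ x, e * x = x * e := hab e he
  -- `s * r * e` is a central idempotent, and it equals `e`: a left inverse of `s` in the corner
  -- `e * R` is two-sided
  have hg : IsIdempotentElem (s * r * e) := by
    calc s * r * e * (s * r * e) = s * r * (e * (s * r * e)) := by simp only [mul_assoc]
      _ = s * r * (s * r * e * e) := by rw [ce]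
      _ = s * (r * s) * (r * (e * e)) := by simp only [mul_assoc]
      _ = s * (e * (r * e)) := by rw [hr, he', mul_assoc]
      _ = s * r * e := by rw [ce (r * e), mul_assoc r, he', mul_assoc]
  have hsr : s * r * e = e := by
    calc s * r * e = s * r * e * e := by rw [mul_assoc _ e e, he']
      _ = s * r * e * (r * s) := by rw [hr]
      _ = r * (s * r * e) * s := by rw [← mul_assoc, hab _ hg r]
      _ = r * s * (r * (e * s)) := by simp only [mul_assoc]
      _ = e := by rw [ce s, ← mul_assoc r, hr, he', he']
  obtain ⟨v, rfl⟩ := hu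
  have hes (x : R) : e * (e * x) = e * x := by rw [← mul_assoc, he']
  have hv : (v : R) - e = (1 - e) * v - e * s := by
    rw [← hs]; simp only [mul_sub, sub_mul, one_mul, mul_one]; abel
  have hz : (1 - e) * e = 0 := he.one_sub_mul_self
  have hz' : e * (1 - e) = 0 := he.mul_one_sub_self
  -- multiplication of elements split along the central idempotent `e`
  have hmul (p q p' q' : R) : ((1 - e) * p - e * q) * ((1 - e) * p' - e * q')
      = (1 - e) * (p * p') + e * (q * q') := by
    have a1 : (1 - e) * p * ((1 - e) * p') = (1 - e) * (p * p') := by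
      rw [hab _ he.one_sub p, mul_assoc, ← mul_assoc (1 - e) (1 - e), he.one_sub.eq,
        ← mul_assoc, ← hab _ he.one_sub p, mul_assoc]
    have a2 : (1 - e) * p * (e * q') = 0 := by
      rw [hab _ he.one_sub p, mul_assoc, ← mul_assoc (1 - e), hz, zero_mul, mul_zero]
    have a3 : e * q * ((1 - e) * p') = 0 := by
      rw [ce q, mul_assoc, ← mul_assoc e, hz', zero_mul, mul_zero]
    have a4 : e * q * (e * q') = e * (q * q') := by
      rw [ce q, mul_assoc, hes, ← mul_assoc, ← ce q, mul_assoc]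
    rw [sub_mul, mul_sub, mul_sub, a1, a2, a3, a4]; abel
  have hunit : IsUnit ((v : R) - e) := by
    refine ⟨⟨v - e, (1 - e) * ↑v⁻¹ - e * r, ?_, ?_⟩, rfl⟩
    · rw [hv, hmul, v.mul_inv, ce (s * r), hsr, mul_one, sub_add_cancel]
    · rw [hv, hmul, v.inv_mul, hr, he', mul_one, sub_add_cancel]
  exact he0 ((h v ⟨0, v, .zero, v.isUnit, (zero_add _).symm⟩).2 0 v e (v - e) .zero v.isUnit he
    hunit (zero_add _).symm (by abel)).symm

end Helpers

/-- A semipotent ring is a CUNC-ring iff it is a CUC-ring with nil Jacobson radical. -/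
theorem semipotent_cunc_iff_cuc_and_jacobson_nil {R : Type*} [Ring R]
    (h : IsSemipotentRing R) :
    IsCUNCRing R ↔
      (IsCUCRing R ∧ ∀ x ∈ Ideal.jacobson (⊥ : Ideal R), IsNilpotent x) := by
  constructor
  · intro hR
    have hab := hR.isAbelianRing
    have huu := hR.isUURing
    refine ⟨fun a ha => ⟨ha, fun e u f v he hu hf hv h1 h2 => ?_⟩, fun x hx => ?_⟩
    · obtain ⟨b, hb, rfl⟩ := huu u hu
      obtain ⟨c, hc, rfl⟩ := huu v hv
      refine hab.idempotent_eq_of_add_nilpotent he hb hf hc (add_left_cancel (a := (1 : R)) ?_)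
      rw [add_left_comm, ← h1, h2, add_left_comm]
    · obtain ⟨b, hb, hxb⟩ := huu _ (isUnit_one_add_of_mem_jacobson_bot hx)
      rwa [add_left_cancel hxb]
  · rintro ⟨hR, hJ⟩ a ⟨e, u, he, hu, rfl⟩
    have hab := hR.isAbelianRing
    have hb : IsNilpotent (u - 1) := by
      simpa using (hJ _ (hR.one_sub_mem_jacobson h hu)).neg
    have h2 : IsNilpotent (2 : R) := by
      have := hJ _ (hR.one_sub_mem_jacobson h (isUnit_one.neg : IsUnit (-1 : R)))
      rwa [sub_neg_eq_add, one_add_one_eq_two] at this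
    have h2e : IsNilpotent (2 * e) := (Commute.ofNat_left 2 e).isNilpotent_mul_right h2
    have hcomm : Commute (2 * e) (u - 1) :=
      (Commute.ofNat_left 2 _).mul_left (hab e he (u - 1))
    refine ⟨⟨1 - e, 2 * e + (u - 1), he.one_sub, hcomm.isNilpotent_add h2e hb, ?_⟩, ?_⟩
    · rw [two_mul]; abel
    · intro e₁ b₁ f₁ c₁ he₁ hb₁ hf₁ hc₁ h₁ h₂
      exact hab.idempotent_eq_of_add_nilpotent he₁ hb₁ hf₁ hc₁ (h₁.symm.trans h₂)
end
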